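/- Shuffle decomposition in depth: ζ_{(r,1),1}((1,𝐤;2),(2)) · ζ(2) = 2ζ_{(r,1),2}((1,𝐤;2),(2,2)) + 4ζ_{(r,1),2}((1,𝐤;2),(1,3)) + 2ζ_{(r,1),2}((2,𝐤;2),(1,2)) + 4ζ_{(r,1),2}((1,𝐤;3),(1,2)) + ζ_{(r,1),2}((2,𝐤;2),(2,1)) + 2ζ_{(r,1),2}((1,𝐤;3),(2,1)) + 2ζ_{(r,1,1),1}((1,𝐤;2;2),(2)) + 4ζ_{(r,1,1),1}((1,𝐤;1;3),(2)). -/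

import Mathlib

/-- Product `∏_j b_j^{-k_j}` over the row entries `b₂ ≤ ⋯ ≤ b_r`. -/
noncomputable def rowProd {n : ℕ} (k : Fin n → ℕ) (b : Fin n → ℕ) : ℝ :=
  (∏ j, ((b j : ℝ)) ^ (k j))⁻¹

/-- `ζ_{(r,1),1}((u,𝐤;v),(t))`. -/
noncomputable def ef1 {n : ℕ} (k : Fin n → ℕ) (u v t : ℕ) : ℝ :=
  ∑' x : {x : (ℕ × ℕ × ℕ) × (Fin n → ℕ) //
      0 < x.1.1 ∧ 0 < x.1.2.1 ∧ x.1.2.1 < x.1.2.2 ∧ Monotone x.2 ∧ ∀ j, x.1.2.1 ≤ x.2 j},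
    ((x.1.1.1 : ℝ) ^ t * ((x.1.1.1 + x.1.1.2.1 : ℕ) : ℝ) ^ u
        * ((x.1.1.1 + x.1.1.2.2 : ℕ) : ℝ) ^ v)⁻¹ * rowProd k x.1.2

/-- `ζ_{(r,1),2}((u,𝐤;v),(t₁,t₂))`. -/
noncomputable def ef2 {n : ℕ} (k : Fin n → ℕ) (u v t₁ t₂ : ℕ) : ℝ :=
  ∑' x : {x : (ℕ × ℕ × ℕ × ℕ) × (Fin n → ℕ) //
      0 < x.1.1 ∧ x.1.1 < x.1.2.1 ∧ 0 < x.1.2.2.1 ∧ x.1.2.2.1 < x.1.2.2.2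
        ∧ Monotone x.2 ∧ ∀ j, x.1.2.2.1 ≤ x.2 j},
    ((x.1.1.1 : ℝ) ^ t₁ * (x.1.1.2.1 : ℝ) ^ t₂ * ((x.1.1.2.1 + x.1.1.2.2.1 : ℕ) : ℝ) ^ u
        * ((x.1.1.2.1 + x.1.1.2.2.2 : ℕ) : ℝ) ^ v)⁻¹ * rowProd k x.1.2

/-- `ζ_{(r,1,1),1}((u,𝐤;v;w),(t))`: hook `(r,1,1)` elementary factorial value, chain length 1:
`Σ_{m ≥ 1, m₁<m₂<m₃ column, m₁ ≤ b row} m^{-t}(m+m₁)^{-u}(m+m₂)^{-v}(m+m₃)^{-w} ∏ b^{-k}`. -/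
noncomputable def efMu1 {n : ℕ} (k : Fin n → ℕ) (u v w t : ℕ) : ℝ :=
  ∑' x : {x : (ℕ × ℕ × ℕ × ℕ) × (Fin n → ℕ) //
      0 < x.1.1 ∧ 0 < x.1.2.1 ∧ x.1.2.1 < x.1.2.2.1 ∧ x.1.2.2.1 < x.1.2.2.2
        ∧ Monotone x.2 ∧ ∀ j, x.1.2.1 ≤ x.2 j},
    ((x.1.1.1 : ℝ) ^ t * ((x.1.1.1 + x.1.1.2.1 : ℕ) : ℝ) ^ u
        * ((x.1.1.1 + x.1.1.2.2.1 : ℕ) : ℝ) ^ v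
        * ((x.1.1.1 + x.1.1.2.2.2 : ℕ) : ℝ) ^ w)⁻¹ * rowProd k x.1.2

/-!
Let `m` be the chain element, `a < c` the column and `q` the summation variable of `ζ(2)`. The
identity `1 / (x q) = (1 / x + 1 / q) / (x + q)`, applied to `x = m + c`, then to `x = m + a` and
finally to `x = m`, expands the summand of the product into terms of four kinds, according to where
`q` is shuffled in: at the end of the column, `(a, c, c + q)`; inside it, `(a, a + q, c + q)`; at
the beginning of the chain, `(q, q + m)`; or at its end, `(m, m + q)`. Each of these is a bijective
change of variables, and since all terms are nonnegative the expansion may be summed term by term as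
soon as the left-hand side converges.
-/

/-- Index set of `ef1`: tuples `((m, a, c), b)`. -/
abbrev Ef1Index (n : ℕ) : Type :=
  {x : (ℕ × ℕ × ℕ) × (Fin n → ℕ) //
      0 < x.1.1 ∧ 0 < x.1.2.1 ∧ x.1.2.1 < x.1.2.2 ∧ Monotone x.2 ∧ ∀ j, x.1.2.1 ≤ x.2 j}

/-- Index set of `ef2`: tuples `((m₁, m₂, a, c), b)`. -/
abbrev Ef2Index (n : ℕ) : Type :=
  {x : (ℕ × ℕ × ℕ × ℕ) × (Fin n → ℕ) //
      0 < x.1.1 ∧ x.1.1 < x.1.2.1 ∧ 0 < x.1.2.2.1 ∧ x.1.2.2.1 < x.1.2.2.2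
        ∧ Monotone x.2 ∧ ∀ j, x.1.2.2.1 ≤ x.2 j}

/-- Index set of `efMu1`: tuples `((m, a₁, a₂, a₃), b)`. -/
abbrev EfMu1Index (n : ℕ) : Type :=
  {x : (ℕ × ℕ × ℕ × ℕ) × (Fin n → ℕ) //
      0 < x.1.1 ∧ 0 < x.1.2.1 ∧ x.1.2.1 < x.1.2.2.1 ∧ x.1.2.2.1 < x.1.2.2.2
        ∧ Monotone x.2 ∧ ∀ j, x.1.2.1 ≤ x.2 j}

/-- Index set of the product `ef1 k u v t * ζ(s)`. -/
abbrev ShuffleIndex (n : ℕ) : Type := Ef1Index n × {q : ℕ // 0 < q}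

/-- The summand of `ef1`. -/
noncomputable def ef1Term {n : ℕ} (k : Fin n → ℕ) (u v t : ℕ) (x : Ef1Index n) : ℝ :=
  ((x.1.1.1 : ℝ) ^ t * ((x.1.1.1 + x.1.1.2.1 : ℕ) : ℝ) ^ u
      * ((x.1.1.1 + x.1.1.2.2 : ℕ) : ℝ) ^ v)⁻¹ * rowProd k x.1.2

/-- The summand of `ef2`. -/
noncomputable def ef2Term {n : ℕ} (k : Fin n → ℕ) (u v t₁ t₂ : ℕ) (x : Ef2Index n) : ℝ :=
  ((x.1.1.1 : ℝ) ^ t₁ * (x.1.1.2.1 : ℝ) ^ t₂ * ((x.1.1.2.1 + x.1.1.2.2.1 : ℕ) : ℝ) ^ u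
      * ((x.1.1.2.1 + x.1.1.2.2.2 : ℕ) : ℝ) ^ v)⁻¹ * rowProd k x.1.2

/-- The summand of `efMu1`. -/
noncomputable def efMu1Term {n : ℕ} (k : Fin n → ℕ) (u v w t : ℕ) (x : EfMu1Index n) : ℝ :=
  ((x.1.1.1 : ℝ) ^ t * ((x.1.1.1 + x.1.1.2.1 : ℕ) : ℝ) ^ u
      * ((x.1.1.1 + x.1.1.2.2.1 : ℕ) : ℝ) ^ v
      * ((x.1.1.1 + x.1.1.2.2.2 : ℕ) : ℝ) ^ w)⁻¹ * rowProd k x.1.2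

section Nonneg

variable {n : ℕ} (k : Fin n → ℕ)

lemma rowProd_nonneg (b : Fin n → ℕ) : 0 ≤ rowProd k b := by
  unfold rowProd
  positivity

lemma ef1Term_nonneg (u v t : ℕ) (x : Ef1Index n) : 0 ≤ ef1Term k u v t x :=
  mul_nonneg (by positivity) (rowProd_nonneg k _)

lemma ef2Term_nonneg (u v t₁ t₂ : ℕ) (x : Ef2Index n) : 0 ≤ ef2Term k u v t₁ t₂ x :=
  mul_nonneg (by positivity) (rowProd_nonneg k _)

lemma efMu1Term_nonneg (u v w t : ℕ) (x : EfMu1Index n) : 0 ≤ efMu1Term k u v w t x :=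
  mul_nonneg (by positivity) (rowProd_nonneg k _)

end Nonneg

namespace ShuffleIndex

variable (n : ℕ)

/-- Shuffling `q` in at the end of the chain: `(m, a, c; q) ↦ (m, m + q, a, c)`. -/
def chainAppend : ShuffleIndex n ≃ Ef2Index n where
  toFun p := ⟨((p.1.1.1.1, p.1.1.1.1 + p.2, p.1.1.1.2), p.1.1.2),
    p.1.2.1, Nat.lt_add_of_pos_right p.2.2, p.1.2.2⟩
  invFun y := (⟨((y.1.1.1, y.1.1.2.2), y.1.2), y.2.1, y.2.2.2⟩,
    ⟨y.1.1.2.1 - y.1.1.1, Nat.sub_pos_of_lt y.2.2.1⟩)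
  left_inv p := by simp
  right_inv y := Subtype.ext <| by simp [Nat.add_sub_cancel' y.2.2.1.le]

/-- Exchanging `m` and `q`. -/
def swap : ShuffleIndex n ≃ ShuffleIndex n where
  toFun p := (⟨((p.2, p.1.1.1.2), p.1.1.2), p.2.2, p.1.2.2⟩, ⟨p.1.1.1.1, p.1.2.1⟩)
  invFun p := (⟨((p.2, p.1.1.1.2), p.1.1.2), p.2.2, p.1.2.2⟩, ⟨p.1.1.1.1, p.1.2.1⟩)
  left_inv _ := rfl
  right_inv _ := rfl

/-- Shuffling `q` in at the beginning of the chain: `(m, a, c; q) ↦ (q, q + m, a, c)`. -/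
def chainPrepend : ShuffleIndex n ≃ Ef2Index n :=
  (swap n).trans (chainAppend n)

/-- Shuffling `q` in at the end of the column: `(m, a, c; q) ↦ (m, a, c, c + q)`. -/
def columnAppend : ShuffleIndex n ≃ EfMu1Index n where
  toFun p := ⟨((p.1.1.1.1, p.1.1.1.2.1, p.1.1.1.2.2, p.1.1.1.2.2 + p.2), p.1.1.2),
    p.1.2.1, p.1.2.2.1, p.1.2.2.2.1, Nat.lt_add_of_pos_right p.2.2, p.1.2.2.2.2⟩
  invFun y := (⟨((y.1.1.1, y.1.1.2.1, y.1.1.2.2.1), y.1.2),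
      y.2.1, y.2.2.1, y.2.2.2.1, y.2.2.2.2.2⟩,
    ⟨y.1.1.2.2.2 - y.1.1.2.2.1, Nat.sub_pos_of_lt y.2.2.2.2.1⟩)
  left_inv p := by simp
  right_inv y := Subtype.ext <| by simp [Nat.add_sub_cancel' y.2.2.2.2.1.le]

/-- Shuffling `q` into the column: `(m, a, c; q) ↦ (m, a, a + q, c + q)`. -/
def columnInsert : ShuffleIndex n ≃ EfMu1Index n where
  toFun p := ⟨((p.1.1.1.1, p.1.1.1.2.1, p.1.1.1.2.1 + p.2, p.1.1.1.2.2 + p.2), p.1.1.2),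
    p.1.2.1, p.1.2.2.1, Nat.lt_add_of_pos_right p.2.2, Nat.add_lt_add_right p.1.2.2.2.1 _,
    p.1.2.2.2.2⟩
  invFun y := (⟨((y.1.1.1, y.1.1.2.1, y.1.1.2.2.2 - (y.1.1.2.2.1 - y.1.1.2.1)), y.1.2),
      y.2.1, y.2.2.1, by have := y.2.2.2; dsimp only; omega, y.2.2.2.2.2⟩,
    ⟨y.1.1.2.2.1 - y.1.1.2.1, Nat.sub_pos_of_lt y.2.2.2.1⟩)
  left_inv p := by simp
  right_inv y := by
    obtain ⟨⟨⟨m, a₁, a₂, a₃⟩, b⟩, -, -, h₁₂, h₂₃, -⟩ := y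
    dsimp only at h₁₂ h₂₃
    simp only [Subtype.mk.injEq, Prod.mk.injEq, and_true, true_and]
    omega

end ShuffleIndex

section PartialFractions

lemma inv_mul_inv_eq_inv_add_mul {K : Type*} [Field K] {a b : K} (ha : a ≠ 0) (hb : b ≠ 0)
    (hab : a + b ≠ 0) : a⁻¹ * b⁻¹ = (a + b)⁻¹ * (a⁻¹ + b⁻¹) := by
  field_simp
  ring

variable {R : Type*} [CommRing R]

lemma mul_sq_of_mul_eq_mul_add {x w p : R} (h : x * w = p * (x + w)) :
    x * w ^ 2 = p ^ 2 * (x + w) + p * w ^ 2 := by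
  linear_combination (w + p) * h

lemma sq_mul_sq_of_mul_eq_mul_add {x w p : R} (h : x * w = p * (x + w)) :
    x ^ 2 * w ^ 2 = p ^ 2 * (x ^ 2 + w ^ 2) + 2 * p ^ 3 * (x + w) := by
  linear_combination (x * w + p * (x + w) + 2 * p ^ 2) * h

/-- The variables stand for `x = 1 / m`, `y = 1 / (m + a)`, `z = 1 / (m + c)`, `w = 1 / q` and
`x' = 1 / (m + q)`, `y' = 1 / (m + a + q)`, `z' = 1 / (m + c + q)`. -/
lemma shuffle_partial_fractions {x y z w x' y' z' : R} (hx : x * w = x' * (x + w))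
    (hy : y * w = y' * (y + w)) (hz : z * w = z' * (z + w)) :
    x ^ 2 * y * z ^ 2 * w ^ 2 =
      (w ^ 2 * x' ^ 2 * y' * z' ^ 2 + 2 * (w * x' ^ 3 * y' * z' ^ 2)
          + w * x' ^ 2 * y' ^ 2 * z' ^ 2 + 2 * (w * x' ^ 2 * y' * z' ^ 3))
        + (x ^ 2 * x' ^ 2 * y' * z' ^ 2 + 2 * (x * x' ^ 3 * y' * z' ^ 2)
          + x * x' ^ 2 * y' ^ 2 * z' ^ 2 + 2 * (x * x' ^ 2 * y' * z' ^ 3)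
          + x ^ 2 * x' * y' ^ 2 * z' ^ 2 + 2 * (x ^ 2 * x' * y' * z' ^ 3))
        + (x ^ 2 * y * y' ^ 2 * z' ^ 2 + 2 * (x ^ 2 * y * y' * z' ^ 3))
        + (x ^ 2 * y * z ^ 2 * z' ^ 2 + 2 * (x ^ 2 * y * z * z' ^ 3)) := by
  have expand_z := sq_mul_sq_of_mul_eq_mul_add hz
  have expand_y := mul_sq_of_mul_eq_mul_add hy
  have expand_x_sq := sq_mul_sq_of_mul_eq_mul_add hx
  have expand_x : w * x ^ 2 = x' ^ 2 * (w + x) + x' * x ^ 2 :=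
    mul_sq_of_mul_eq_mul_add (by linear_combination hx)
  linear_combination x ^ 2 * y * expand_z + x ^ 2 * z' ^ 2 * expand_y
    + 2 * x ^ 2 * z' ^ 3 * hy + y' * z' ^ 2 * expand_x_sq
    + (y' ^ 2 * z' ^ 2 + 2 * y' * z' ^ 3) * expand_x

end PartialFractions

section ShuffleTerms

variable {n : ℕ} (k : Fin n → ℕ)

/-- The terms of the shuffle expansion in which `q` is at the beginning of the chain. -/
noncomputable def chainPrependTerm (y : Ef2Index n) : ℝ :=
  ef2Term k 1 2 2 2 y + 2 * ef2Term k 1 2 1 3 y + ef2Term k 2 2 1 2 y + 2 * ef2Term k 1 3 1 2 y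

/-- The terms of the shuffle expansion in which `q` is at the end of the chain. -/
noncomputable def chainAppendTerm (y : Ef2Index n) : ℝ :=
  chainPrependTerm k y + ef2Term k 2 2 2 1 y + 2 * ef2Term k 1 3 2 1 y

/-- The terms of the shuffle expansion in which `q` joins the column, be it inside or at the end. -/
noncomputable def columnTerm (y : EfMu1Index n) : ℝ :=
  efMu1Term k 1 2 2 2 y + 2 * efMu1Term k 1 1 3 2 y

lemma ef1Term_mul_inv_sq (p : ShuffleIndex n) :
    ef1Term k 1 2 2 p.1 * ((p.2 : ℝ) ^ 2)⁻¹ =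
      chainPrependTerm k (ShuffleIndex.chainPrepend n p)
        + chainAppendTerm k (ShuffleIndex.chainAppend n p)
        + columnTerm k (ShuffleIndex.columnInsert n p)
        + columnTerm k (ShuffleIndex.columnAppend n p) := by
  obtain ⟨⟨⟨⟨m, a, c⟩, b⟩, hm, -⟩, q, hq⟩ := p
  have hm' : (0 : ℝ) < m := Nat.cast_pos.2 hm
  have hq' : (0 : ℝ) < q := Nat.cast_pos.2 hq
  have merge {d : ℝ} (hd : 0 < d) : d⁻¹ * (q : ℝ)⁻¹ = (d + q)⁻¹ * (d⁻¹ + (q : ℝ)⁻¹) :=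
    inv_mul_inv_eq_inv_add_mul hd.ne' hq'.ne' (add_pos hd hq').ne'
  have expansion := shuffle_partial_fractions (merge hm')
    (merge (d := m + a) (by positivity)) (merge (d := m + c) (by positivity))
  simp only [chainPrependTerm, chainAppendTerm, columnTerm, ef1Term, ef2Term, efMu1Term,
    ShuffleIndex.chainPrepend, ShuffleIndex.chainAppend, ShuffleIndex.swap,
    ShuffleIndex.columnInsert, ShuffleIndex.columnAppend, Equiv.coe_fn_mk, Equiv.trans_apply,
    Nat.cast_add]
  rw [add_comm (q : ℝ) m, add_right_comm (m : ℝ) q a, add_right_comm (m : ℝ) q c,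
    ← add_assoc (m : ℝ) a q, ← add_assoc (m : ℝ) c q]
  simp only [mul_inv, ← inv_pow, pow_one]
  linear_combination rowProd k b * expansion

lemma chainPrependTerm_nonneg (y : Ef2Index n) : 0 ≤ chainPrependTerm k y := by
  unfold chainPrependTerm
  linarith [ef2Term_nonneg k 1 2 2 2 y, ef2Term_nonneg k 1 2 1 3 y, ef2Term_nonneg k 2 2 1 2 y,
    ef2Term_nonneg k 1 3 1 2 y]

lemma chainPrependTerm_le_chainAppendTerm (y : Ef2Index n) :
    chainPrependTerm k y ≤ chainAppendTerm k y := by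
  unfold chainAppendTerm
  linarith [ef2Term_nonneg k 2 2 2 1 y, ef2Term_nonneg k 1 3 2 1 y]

lemma chainAppendTerm_nonneg (y : Ef2Index n) : 0 ≤ chainAppendTerm k y :=
  (chainPrependTerm_nonneg k y).trans (chainPrependTerm_le_chainAppendTerm k y)

lemma columnTerm_nonneg (y : EfMu1Index n) : 0 ≤ columnTerm k y := by
  unfold columnTerm
  linarith [efMu1Term_nonneg k 1 2 2 2 y, efMu1Term_nonneg k 1 1 3 2 y]

variable {k}

lemma hasSum_ef2Term_of_le {f : Ef2Index n → ℝ} (hf : Summable f) {u v t₁ t₂ : ℕ}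
    (hle : ∀ y, ef2Term k u v t₁ t₂ y ≤ f y) :
    HasSum (ef2Term k u v t₁ t₂) (ef2 k u v t₁ t₂) :=
  (hf.of_nonneg_of_le (ef2Term_nonneg k u v t₁ t₂) hle).hasSum

lemma hasSum_efMu1Term_of_le {f : EfMu1Index n → ℝ} (hf : Summable f) {u v w t : ℕ}
    (hle : ∀ y, efMu1Term k u v w t y ≤ f y) :
    HasSum (efMu1Term k u v w t) (efMu1 k u v w t) :=
  (hf.of_nonneg_of_le (efMu1Term_nonneg k u v w t) hle).hasSum

lemma hasSum_chainPrependTerm (h : Summable (chainPrependTerm k)) :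
    HasSum (chainPrependTerm k)
      (ef2 k 1 2 2 2 + 2 * ef2 k 1 2 1 3 + ef2 k 2 2 1 2 + 2 * ef2 k 1 3 1 2) := by
  refine (((hasSum_ef2Term_of_le h fun y => ?_).add
    ((hasSum_ef2Term_of_le h fun y => ?_).mul_left 2)).add
    (hasSum_ef2Term_of_le h fun y => ?_)).add ((hasSum_ef2Term_of_le h fun y => ?_).mul_left 2)
  all_goals
    unfold chainPrependTerm
    linarith [ef2Term_nonneg k 1 2 2 2 y, ef2Term_nonneg k 1 2 1 3 y, ef2Term_nonneg k 2 2 1 2 y,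
      ef2Term_nonneg k 1 3 1 2 y]

lemma hasSum_chainAppendTerm (h : Summable (chainAppendTerm k)) :
    HasSum (chainAppendTerm k)
      (ef2 k 1 2 2 2 + 2 * ef2 k 1 2 1 3 + ef2 k 2 2 1 2 + 2 * ef2 k 1 3 1 2
        + ef2 k 2 2 2 1 + 2 * ef2 k 1 3 2 1) := by
  have hprepend := hasSum_chainPrependTerm
    (h.of_nonneg_of_le (chainPrependTerm_nonneg k) (chainPrependTerm_le_chainAppendTerm k))
  refine (hprepend.add (hasSum_ef2Term_of_le h fun y => ?_)).add
    ((hasSum_ef2Term_of_le h fun y => ?_).mul_left 2)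
  all_goals
    unfold chainAppendTerm
    linarith [chainPrependTerm_nonneg k y, ef2Term_nonneg k 2 2 2 1 y, ef2Term_nonneg k 1 3 2 1 y]

lemma hasSum_columnTerm (h : Summable (columnTerm k)) :
    HasSum (columnTerm k) (efMu1 k 1 2 2 2 + 2 * efMu1 k 1 1 3 2) := by
  refine (hasSum_efMu1Term_of_le h fun y => ?_).add
    ((hasSum_efMu1Term_of_le h fun y => ?_).mul_left 2)
  all_goals
    unfold columnTerm
    linarith [efMu1Term_nonneg k 1 2 2 2 y, efMu1Term_nonneg k 1 1 3 2 y]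

lemma hasSum_ef1Term_mul_inv_pow {u v t s : ℕ} (h : Summable (ef1Term k u v t)) (hs : 1 < s) :
    HasSum (fun p : ShuffleIndex n => ef1Term k u v t p.1 * ((p.2 : ℝ) ^ s)⁻¹)
      (ef1 k u v t * ∑' q : {q : ℕ // 0 < q}, ((q : ℝ) ^ s)⁻¹) := by
  have hzeta : Summable fun q : {q : ℕ // 0 < q} => ((q : ℝ) ^ s)⁻¹ :=
    (Real.summable_nat_pow_inv.2 hs).comp_injective Subtype.val_injective
  have hef1 : HasSum (ef1Term k u v t) (ef1 k u v t) := h.hasSum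
  have hproduct := h.mul_of_nonneg hzeta (ef1Term_nonneg k u v t) fun q => by positivity
  exact hef1.mul hzeta.hasSum hproduct

lemma summable_chainAppendTerm (h : Summable (ef1Term k 1 2 2)) :
    Summable (chainAppendTerm k) := by
  refine (ShuffleIndex.chainAppend n).summable_iff.1
    ((hasSum_ef1Term_mul_inv_pow h one_lt_two).summable.of_nonneg_of_le
      (fun p => chainAppendTerm_nonneg k _) fun p => ?_)
  rw [ef1Term_mul_inv_sq, Function.comp_apply]
  linarith [chainPrependTerm_nonneg k (ShuffleIndex.chainPrepend n p),
    columnTerm_nonneg k (ShuffleIndex.columnInsert n p),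
    columnTerm_nonneg k (ShuffleIndex.columnAppend n p)]

lemma summable_columnTerm (h : Summable (ef1Term k 1 2 2)) : Summable (columnTerm k) := by
  refine (ShuffleIndex.columnAppend n).summable_iff.1
    ((hasSum_ef1Term_mul_inv_pow h one_lt_two).summable.of_nonneg_of_le
      (fun p => columnTerm_nonneg k _) fun p => ?_)
  rw [ef1Term_mul_inv_sq, Function.comp_apply]
  linarith [chainPrependTerm_nonneg k (ShuffleIndex.chainPrepend n p),
    chainAppendTerm_nonneg k (ShuffleIndex.chainAppend n p),
    columnTerm_nonneg k (ShuffleIndex.columnInsert n p)]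

theorem shuffle_depth_ef_general (h : Summable (ef1Term k 1 2 2)) :
    ef1 k 1 2 2 * (∑' m : {m : ℕ // 0 < m}, (((m : ℕ) : ℝ) ^ 2)⁻¹) =
      2 * ef2 k 1 2 2 2 + 4 * ef2 k 1 2 1 3 + 2 * ef2 k 2 2 1 2 + 4 * ef2 k 1 3 1 2
        + ef2 k 2 2 2 1 + 2 * ef2 k 1 3 2 1
        + 2 * efMu1 k 1 2 2 2 + 4 * efMu1 k 1 1 3 2 := by
  have happend := summable_chainAppendTerm h
  have hprepend :=
    happend.of_nonneg_of_le (chainPrependTerm_nonneg k) (chainPrependTerm_le_chainAppendTerm k)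
  have hcolumn := hasSum_columnTerm (summable_columnTerm h)
  have hexpansion :=
    ((((ShuffleIndex.chainPrepend n).hasSum_iff.2 (hasSum_chainPrependTerm hprepend)).add
      ((ShuffleIndex.chainAppend n).hasSum_iff.2 (hasSum_chainAppendTerm happend))).add
      ((ShuffleIndex.columnInsert n).hasSum_iff.2 hcolumn)).add
      ((ShuffleIndex.columnAppend n).hasSum_iff.2 hcolumn)
  have hproduct := hasSum_ef1Term_mul_inv_pow h one_lt_two
  simp only [ef1Term_mul_inv_sq] at hproduct
  linarith [hproduct.unique hexpansion]

end ShuffleTerms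

section Convergence

lemma summable_pi_prod {ι : Type*} [Fintype ι] {κ : ι → Type*} {f : ∀ i, κ i → ℝ}
    (hf : ∀ i x, 0 ≤ f i x) (hs : ∀ i, Summable (f i)) :
    Summable fun b : ∀ i, κ i => ∏ i, f i (b i) := by
  classical
  refine summable_of_sum_le (c := ∏ i, ∑' x, f i x)
    (fun b => Finset.prod_nonneg fun i _ => hf i _) fun s => ?_
  calc ∑ b ∈ s, ∏ i, f i (b i)
      ≤ ∑ b ∈ Fintype.piFinset fun i => s.image fun b => b i, ∏ i, f i (b i) :=
        Finset.sum_le_sum_of_subset_of_nonneg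
          (fun b hb => Fintype.mem_piFinset.2 fun i => Finset.mem_image_of_mem _ hb)
          fun b _ _ => Finset.prod_nonneg fun i _ => hf i _
    _ = ∏ i, ∑ x ∈ s.image fun b => b i, f i x := (Finset.prod_univ_sum _ _).symm
    _ ≤ ∏ i, ∑' x, f i x :=
        Finset.prod_le_prod (fun i _ => Finset.sum_nonneg fun x _ => hf i x)
          fun i _ => (hs i).sum_le_tsum _ fun x _ => hf i x

lemma prod_rpow_inv_card_le {ι : Type*} [Fintype ι] [Nonempty ι] {b : ι → ℝ} {M : ℝ}
    (hb : ∀ i, 0 ≤ b i) (hM : ∀ i, b i ≤ M) : ∏ i, b i ^ (Fintype.card ι : ℝ)⁻¹ ≤ M := by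
  have hM₀ : 0 ≤ M := (hb (Classical.arbitrary ι)).trans (hM _)
  calc ∏ i, b i ^ (Fintype.card ι : ℝ)⁻¹
      ≤ ∏ _i : ι, M ^ (Fintype.card ι : ℝ)⁻¹ :=
        Finset.prod_le_prod (fun i _ => Real.rpow_nonneg (hb i) _) fun i _ =>
          Real.rpow_le_rpow (hb i) (hM i) (by positivity)
    _ = M := by
        rw [Finset.prod_const, Finset.card_univ, Real.rpow_inv_natCast_pow hM₀ Fintype.card_ne_zero]

lemma prod_mul_le_prod_pow {ι : Type*} [Fintype ι] {b k : ι → ℕ} {l : ι} (hb : ∀ i, 0 < b i)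
    (hk : ∀ i, 1 ≤ k i) (hl : 2 ≤ k l) : (∏ i, b i) * b l ≤ ∏ i, b i ^ k i := by
  classical
  calc (∏ i, b i) * b l
      = ∏ i, b i ^ (1 + if l = i then 1 else 0) := by
        simp only [pow_add, pow_one, Finset.prod_mul_distrib, Finset.prod_pow_boole,
          Finset.mem_univ, if_true]
    _ ≤ ∏ i, b i ^ k i := by
        refine Finset.prod_le_prod' fun i _ => Nat.pow_le_pow_right (hb i) ?_
        split_ifs with h
        · exact h ▸ hl
        · exact hk i

variable {n : ℕ}

/-- Fillings of a row of length `n`: weakly increasing tuples of positive integers. -/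
abbrev RowIndex (n : ℕ) : Type := {b : Fin n → ℕ // Monotone b ∧ ∀ j, 0 < b j}

variable {k : Fin n → ℕ} {l : Fin n}

/-- The surplus factor `b l` is spread evenly over the whole row, which makes every exponent
exceed `1`. -/
lemma rowProd_le_prod_rpow (hk : ∀ j, 1 ≤ k j) (hl : IsTop l) (hlast : 2 ≤ k l)
    (b : RowIndex n) : rowProd k b ≤ ∏ j, ((b.1 j : ℝ) ^ (1 + (n : ℝ)⁻¹))⁻¹ := by
  obtain ⟨b, hmono, hpos⟩ := b
  have hpos' (j : Fin n) : (0 : ℝ) < b j := Nat.cast_pos.2 (hpos j)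
  have : Nonempty (Fin n) := ⟨l⟩
  have hmean : ∏ j, (b j : ℝ) ^ (n : ℝ)⁻¹ ≤ b l := by
    simpa only [Fintype.card_fin] using prod_rpow_inv_card_le (fun j => (hpos' j).le)
      fun j => Nat.cast_le.2 (hmono (hl j))
  have hsplit (j : Fin n) : (b j : ℝ) ^ (1 + (n : ℝ)⁻¹) = b j * (b j : ℝ) ^ (n : ℝ)⁻¹ :=
    Real.rpow_one_add' (hpos' j).le (by positivity)
  rw [rowProd, Finset.prod_inv_distrib]
  refine inv_anti₀ (Finset.prod_pos fun j _ => Real.rpow_pos_of_pos (hpos' j) _) ?_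
  calc ∏ j, (b j : ℝ) ^ (1 + (n : ℝ)⁻¹)
      = (∏ j, (b j : ℝ)) * ∏ j, (b j : ℝ) ^ (n : ℝ)⁻¹ := by
        simp only [hsplit, Finset.prod_mul_distrib]
    _ ≤ (∏ j, (b j : ℝ)) * b l := by gcongr
    _ ≤ ∏ j, (b j : ℝ) ^ k j := by exact_mod_cast prod_mul_le_prod_pow hpos hk hlast

lemma summable_rowProd (hk : ∀ j, 1 ≤ k j) (hl : IsTop l) (hlast : 2 ≤ k l) :
    Summable fun b : RowIndex n => rowProd k b := by
  have hexponent : 1 < 1 + (n : ℝ)⁻¹ :=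
    lt_add_of_pos_right 1 (inv_pos.2 (Nat.cast_pos.2 (Fin.pos l)))
  have hprod : Summable fun b : Fin n → ℕ => ∏ j, ((b j : ℝ) ^ (1 + (n : ℝ)⁻¹))⁻¹ :=
    summable_pi_prod (f := fun _ (i : ℕ) => ((i : ℝ) ^ (1 + (n : ℝ)⁻¹))⁻¹)
      (fun _ _ => by positivity) fun _ => Real.summable_nat_rpow_inv.2 hexponent
  exact (hprod.comp_injective Subtype.val_injective).of_nonneg_of_le
    (fun b => rowProd_nonneg k b) (rowProd_le_prod_rpow hk hl hlast)

/-- The chain element, the column and the row of an index of `ef1`, the column being treated as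
a row of length two. -/
def Ef1Index.parts (x : Ef1Index n) : ℕ × RowIndex 2 × RowIndex n :=
  (x.1.1.1,
    ⟨![x.1.1.2.1, x.1.1.2.2], Fin.monotone_iff_le_succ.2 fun i => by
        rw [Subsingleton.elim i 0]; exact x.2.2.2.1.le,
      Fin.forall_fin_two.2 ⟨x.2.2.1, x.2.2.1.trans x.2.2.2.1⟩⟩,
    ⟨x.1.2, x.2.2.2.2.1, fun j => x.2.2.1.trans_le (x.2.2.2.2.2 j)⟩)

lemma Ef1Index.parts_injective : Function.Injective (Ef1Index.parts (n := n)) := by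
  rintro ⟨⟨⟨m, a, c⟩, b⟩, hx⟩ ⟨⟨⟨m', a', c'⟩, b'⟩, hx'⟩ h
  simp only [Ef1Index.parts, Prod.mk.injEq, Subtype.mk.injEq, Matrix.vecCons_inj, and_true] at h
  obtain ⟨rfl, ⟨rfl, rfl⟩, rfl⟩ := h
  rfl

lemma ef1Term_le (k : Fin n → ℕ) (u v t : ℕ) (x : Ef1Index n) :
    ef1Term k u v t x ≤
      ((x.parts.1 : ℝ) ^ t)⁻¹ * (rowProd ![u, v] x.parts.2.1 * rowProd k x.parts.2.2) := by
  obtain ⟨⟨⟨m, a, c⟩, b⟩, hm, ha, hac, -⟩ := x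
  have hm' : (0 : ℝ) < m := Nat.cast_pos.2 hm
  have ha' : (0 : ℝ) < a := Nat.cast_pos.2 ha
  have hc' : (0 : ℝ) < c := Nat.cast_pos.2 (ha.trans hac)
  have hpos : (0 : ℝ) < m ^ t * a ^ u * c ^ v :=
    mul_pos (mul_pos (pow_pos hm' t) (pow_pos ha' u)) (pow_pos hc' v)
  have hcolumn : rowProd ![u, v] ![a, c] = ((a : ℝ) ^ u * (c : ℝ) ^ v)⁻¹ := by
    simp [rowProd, Fin.prod_univ_two]
  dsimp only [ef1Term, Ef1Index.parts]
  rw [hcolumn, ← mul_assoc, ← mul_inv, ← mul_assoc]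
  refine mul_le_mul_of_nonneg_right (inv_anti₀ hpos ?_) (rowProd_nonneg k b)
  push_cast
  gcongr <;> linarith

lemma summable_ef1Term {u v t : ℕ} (hu : 1 ≤ u) (hv : 2 ≤ v) (ht : 2 ≤ t) (hk : ∀ j, 1 ≤ k j)
    (hl : IsTop l) (hlast : 2 ≤ k l) : Summable (ef1Term k u v t) := by
  have hchain : Summable fun m : ℕ => ((m : ℝ) ^ t)⁻¹ := Real.summable_nat_pow_inv.2 ht
  have hcolumn : Summable fun a : RowIndex 2 => rowProd ![u, v] a :=
    summable_rowProd (l := 1) (Fin.forall_fin_two.2 ⟨hu, one_le_two.trans hv⟩) Fin.le_last hv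
  have hrow := summable_rowProd hk hl hlast
  have hfilling := hcolumn.mul_of_nonneg hrow (fun _ => rowProd_nonneg _ _)
    fun _ => rowProd_nonneg _ _
  have hproduct := hchain.mul_of_nonneg hfilling (fun _ => by positivity)
    fun _ => mul_nonneg (rowProd_nonneg _ _) (rowProd_nonneg _ _)
  exact (hproduct.comp_injective Ef1Index.parts_injective).of_nonneg_of_le
    (ef1Term_nonneg k u v t) (ef1Term_le k u v t)

end Convergence

/-- Shuffle decomposition in depth:
`ζ_{(r,1),1}((1,𝐤;2),(2))·ζ(2) = 2ζ_{(r,1),2}((1,𝐤;2),(2,2)) + 4ζ_{(r,1),2}((1,𝐤;2),(1,3))`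
`+ 2ζ_{(r,1),2}((2,𝐤;2),(1,2)) + 4ζ_{(r,1),2}((1,𝐤;3),(1,2)) + ζ_{(r,1),2}((2,𝐤;2),(2,1))`
`+ 2ζ_{(r,1),2}((1,𝐤;3),(2,1)) + 2ζ_{(r,1,1),1}((1,𝐤;2;2),(2)) + 4ζ_{(r,1,1),1}((1,𝐤;1;3),(2))`. -/
theorem shuffle_depth_ef (n : ℕ) (hn : 1 ≤ n) (k : Fin n → ℕ)
    (hk : ∀ j, 1 ≤ k j) (hlast : 2 ≤ k ⟨n - 1, by omega⟩) :
    ef1 k 1 2 2 * (∑' m : {m : ℕ // 0 < m}, (((m : ℕ) : ℝ) ^ 2)⁻¹) =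
      2 * ef2 k 1 2 2 2 + 4 * ef2 k 1 2 1 3 + 2 * ef2 k 2 2 1 2 + 4 * ef2 k 1 3 1 2
        + ef2 k 2 2 2 1 + 2 * ef2 k 1 3 2 1
        + 2 * efMu1 k 1 2 2 2 + 4 * efMu1 k 1 1 3 2 :=
  shuffle_depth_ef_general <| summable_ef1Term le_rfl le_rfl le_rfl hk
    (fun j => Nat.le_sub_one_of_lt j.2) hlast
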